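/- arXiv:2402.15912 — 2 statements merged into one kernel-verified Lean document; each statement's English description precedes it below -/
import Mathlib

section
/- (Theorem 1) Fix the exponential utility u(w) = (1 − e^{−rw})/r with r ≠ 0 and q = 1/2, and let ρ_SA be a bipartite density matrix on ℂ^{d_S} ⊗ ℂ^{d_A} with reduced state ρ_S = Tr_A(ρ_SA). Then the maximum daemonic gain vanishes, δ𝓤(ρ_SA) = 0, if and only if there exist an orthonormal eigenbasis {|u_k⟩} of e^{−rH_S/2} ρ_S e^{−rH_S/2} with eigenvalues in decreasing order and positive semidefinite matrices C^A_k on ℂ^{d_A} with C^A_k − C^A_{k+1} positive semidefinite for all k = 1, ..., d_S − 1, such that ρ_SA = Σ_k (e^{rH_S/2} |u_k⟩⟨u_k| e^{rH_S/2}) ⊗ C^A_k; in particular every such ρ_SA is separable. -/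
open Matrix BigOperators Finset Kronecker
open scoped ComplexOrder

noncomputable section

namespace Daemonic

/-- The outer product `|x⟩⟨y|` as a matrix. -/
def ketbra {ι : Type*} [Fintype ι] (x y : ι → ℂ) : Matrix ι ι ℂ :=
  Matrix.vecMulVec x (star y)

/-- A family of vectors is orthonormal. -/
def ONFam {ι κ : Type*} [Fintype ι] [DecidableEq κ] (v : κ → ι → ℂ) : Prop :=
  ∀ i j, star (v i) ⬝ᵥ v j = if i = j then 1 else 0

/-- A density matrix: positive semidefinite with unit trace. -/
def IsDensity {ι : Type*} [Fintype ι] (ρ : Matrix ι ι ℂ) : Prop :=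
  ρ.PosSemidef ∧ ρ.trace = 1

/-- The matrix element `⟨x|M|y⟩`. -/
def matElem {ι : Type*} [Fintype ι] (M : Matrix ι ι ℂ) (x y : ι → ℂ) : ℂ :=
  star x ⬝ᵥ (M *ᵥ y)

/-- The Hamiltonian `H_S = ∑ₖ εₖ |εₖ⟩⟨εₖ|`. -/
def ham {n : ℕ} (ε : Fin n → ℝ) (v : Fin n → Fin n → ℂ) : Matrix (Fin n) (Fin n) ℂ :=
  ∑ k, (ε k : ℂ) • ketbra (v k) (v k)

/-- `e^{t H_S} = ∑ₖ e^{t εₖ} |εₖ⟩⟨εₖ|` (functional calculus in the eigenbasis of `H_S`). -/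
def expHam {n : ℕ} (ε : Fin n → ℝ) (v : Fin n → Fin n → ℂ) (t : ℝ) :
    Matrix (Fin n) (Fin n) ℂ :=
  ∑ k, (Real.exp (t * ε k) : ℂ) • ketbra (v k) (v k)

/-- The expected utility `⟨u(w)⟩_{ρ,U}` for quasiprobability parameter `q`,
with respect to the eigenvalues `ε` and orthonormal eigenvectors `v` of `H_S`. -/
def expUtil {n : ℕ} (u : ℝ → ℝ) (q : ℝ) (ε : Fin n → ℝ) (v : Fin n → Fin n → ℂ)
    (ρ U : Matrix (Fin n) (Fin n) ℂ) : ℝ :=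
  ∑ i, ∑ j, ∑ k,
    (matElem ρ (v i) (v j) * matElem Uᴴ (v j) (v k) * matElem U (v k) (v i)).re *
      u (q * ε i + (1 - q) * ε j - ε k)

/-- The optimal expected utility `𝓤(ρ) = max over unitaries U of ⟨u(w)⟩_{ρ,U}`. -/
def optUtil {n : ℕ} (u : ℝ → ℝ) (q : ℝ) (ε : Fin n → ℝ) (v : Fin n → Fin n → ℂ)
    (ρ : Matrix (Fin n) (Fin n) ℂ) : ℝ :=
  ⨆ U : Matrix.unitaryGroup (Fin n) ℂ, expUtil u q ε v ρ (U : Matrix (Fin n) (Fin n) ℂ)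

/-- The exponential utility `u(w) = (1 - e^{-r w})/r`. -/
def expUtility (r : ℝ) : ℝ → ℝ := fun w => (1 - Real.exp (-r * w)) / r

/-- The partial trace over the ancilla. -/
def ptraceA {dS dA : ℕ} (ρSA : Matrix (Fin dS × Fin dA) (Fin dS × Fin dA) ℂ) :
    Matrix (Fin dS) (Fin dS) ℂ :=
  Matrix.of fun i j => ∑ a, ρSA (i, a) (j, a)

/-- The unnormalized conditional state `Tr_A((I ⊗ Π_a) ρ_SA (I ⊗ Π_a))`, where
`Π_a = |a⟩⟨a|` projects onto the vector `w a` of an orthonormal basis `w` of the ancilla. -/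
def condUnnorm {dS dA : ℕ} (w : Fin dA → Fin dA → ℂ)
    (ρSA : Matrix (Fin dS × Fin dA) (Fin dS × Fin dA) ℂ) (a : Fin dA) :
    Matrix (Fin dS) (Fin dS) ℂ :=
  Matrix.of fun i j => ∑ c, ∑ d, ρSA (i, c) (j, d) * (w a d * star (w a c))

/-- The outcome probability `p_a = Tr((I ⊗ Π_a) ρ_SA)`. -/
def prob {dS dA : ℕ} (w : Fin dA → Fin dA → ℂ)
    (ρSA : Matrix (Fin dS × Fin dA) (Fin dS × Fin dA) ℂ) (a : Fin dA) : ℝ :=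
  ((condUnnorm w ρSA a).trace).re

/-- The conditional state `ρ_{S|a}`. -/
def condState {dS dA : ℕ} (w : Fin dA → Fin dA → ℂ)
    (ρSA : Matrix (Fin dS × Fin dA) (Fin dS × Fin dA) ℂ) (a : Fin dA) :
    Matrix (Fin dS) (Fin dS) ℂ :=
  ((prob w ρSA a : ℂ))⁻¹ • condUnnorm w ρSA a

/-- The daemonic expected utility `𝓤_{{Π_a}}(ρ_SA) = ∑_a p_a 𝓤(ρ_{S|a})`. -/
def daemonicUtil {dS dA : ℕ} (u : ℝ → ℝ) (q : ℝ) (ε : Fin dS → ℝ)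
    (v : Fin dS → Fin dS → ℂ) (w : Fin dA → Fin dA → ℂ)
    (ρSA : Matrix (Fin dS × Fin dA) (Fin dS × Fin dA) ℂ) : ℝ :=
  ∑ a, prob w ρSA a * optUtil u q ε v (condState w ρSA a)

/-- The maximum daemonic gain `δ𝓤(ρ_SA)`, maximizing over all orthonormal bases of the
ancilla (equivalently, over the rows of all unitary matrices). -/
def daemonicGain {dS dA : ℕ} (u : ℝ → ℝ) (q : ℝ) (ε : Fin dS → ℝ)
    (v : Fin dS → Fin dS → ℂ)
    (ρSA : Matrix (Fin dS × Fin dA) (Fin dS × Fin dA) ℂ) : ℝ :=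
  (⨆ V : Matrix.unitaryGroup (Fin dA) ℂ,
      daemonicUtil u q ε v (fun a => (V : Matrix (Fin dA) (Fin dA) ℂ) a) ρSA) -
    optUtil u q ε v (ptraceA ρSA)

/-- The ergotropy of a (possibly unnormalized) state `σ` with respect to a Hamiltonian `H`:
`ℰ_H(σ) = max over unitaries U of (Tr(Hσ) - Tr(H U σ U†))`. -/
def ergotropyH {n : ℕ} (H σ : Matrix (Fin n) (Fin n) ℂ) : ℝ :=
  ⨆ U : Matrix.unitaryGroup (Fin n) ℂ,
    ((H * σ).trace -
      (H * ((U : Matrix (Fin n) (Fin n) ℂ) * σ * (U : Matrix (Fin n) (Fin n) ℂ)ᴴ)).trace).re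

/-- A separable bipartite state: a convex combination of product states. -/
def IsSeparable {dS dA : ℕ} (ρSA : Matrix (Fin dS × Fin dA) (Fin dS × Fin dA) ℂ) : Prop :=
  ∃ (m : ℕ) (p : Fin m → ℝ) (σ : Fin m → Matrix (Fin dS) (Fin dS) ℂ)
    (τ : Fin m → Matrix (Fin dA) (Fin dA) ℂ),
    (∀ k, 0 ≤ p k) ∧ (∑ k, p k = 1) ∧ (∀ k, IsDensity (σ k)) ∧ (∀ k, IsDensity (τ k)) ∧
    ρSA = ∑ k, (p k : ℂ) • (σ k ⊗ₖ τ k)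

/-- A classical-quantum state `ρ_SA = ∑ₖ pₖ Pₖ ⊗ ρᴬₖ` with `Pₖ` mutually orthogonal
rank-one projectors summing to the identity. -/
def IsClassicalQuantum {dS dA : ℕ}
    (ρSA : Matrix (Fin dS × Fin dA) (Fin dS × Fin dA) ℂ) : Prop :=
  ∃ (p : Fin dS → ℝ) (ψ : Fin dS → Fin dS → ℂ) (τ : Fin dS → Matrix (Fin dA) (Fin dA) ℂ),
    (∀ k, 0 ≤ p k) ∧ (∑ k, p k = 1) ∧ ONFam ψ ∧ (∀ k, IsDensity (τ k)) ∧
    ρSA = ∑ k, (p k : ℂ) • (ketbra (ψ k) (ψ k) ⊗ₖ τ k)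

/-- The dephasing map associated with an orthonormal basis `v`. -/
def dephase {n : ℕ} (v : Fin n → Fin n → ℂ) (ρ : Matrix (Fin n) (Fin n) ℂ) :
    Matrix (Fin n) (Fin n) ℂ :=
  ∑ k, ketbra (v k) (v k) * ρ * ketbra (v k) (v k)

/-! For the exponential utility with `q = 1/2`, the expected utility of a unitary `U` is
`Tr ρ / r - ∑ₖ (exp (r εₖ) / r) ⟨k|W ρ W†|k⟩` with `W = X e^{-r H_S / 2}` and `X` the unitary `U`
read in the energy basis. The diagonal of `X σ X†` is a doubly stochastic image of the spectrum of
`σ`, so by Birkhoff's theorem and the rearrangement inequality `X` is optimal exactly when it makes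
the tilted state `σ = e^{-r H_S / 2} ρ e^{-r H_S / 2}` diagonal with decreasing diagonal. For a
fixed `X` the utility is linear in `ρ`, so the gain vanishes exactly when one and the same `X`
sorts the tilted conditional states of all ancilla vectors `x`. The `(i, j)` entry of such a sorted
state is the quadratic form at `x` of the `(i, j)` block of the rotated tilted `ρ_SA`: off-diagonal
blocks therefore vanish, and the diagonal blocks `C_k` are positive and decreasing. -/

lemma dotProduct_sum_smul_permMatrix_mulVec {R n : Type*} [CommRing R] [Fintype n]
    [DecidableEq n] (w : Equiv.Perm n → R) (f g : n → R) :
    f ⬝ᵥ ((∑ s, w s • s.permMatrix R) *ᵥ g) = ∑ s, w s * ∑ i, f i * g (s i) := by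
  simp only [sum_mulVec, smul_mulVec, permMatrix_mulVec, dotProduct_sum, dotProduct_smul,
    smul_eq_mul]
  rfl

section Rearrangement

variable {R : Type*} [Field R] [LinearOrder R] [IsStrictOrderedRing R]

theorem dotProduct_le_dotProduct_mulVec_of_antivary {n : Type*} [Fintype n] [DecidableEq n]
    {D : Matrix n n R} {f g : n → R} (hfg : Antivary f g) (hD : D ∈ doublyStochastic R n) :
    f ⬝ᵥ g ≤ f ⬝ᵥ (D *ᵥ g) := by
  obtain ⟨w, hw_nonneg, hw_sum, rfl⟩ := exists_eq_sum_perm_of_mem_doublyStochastic hD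
  calc f ⬝ᵥ g = ∑ s, w s * (f ⬝ᵥ g) := by rw [← sum_mul, hw_sum, one_mul]
    _ ≤ ∑ s, w s * ∑ i, f i * g (s i) :=
      sum_le_sum fun s _ =>
        mul_le_mul_of_nonneg_left hfg.sum_mul_le_sum_mul_comp_perm (hw_nonneg s)
    _ = _ := (dotProduct_sum_smul_permMatrix_mulVec w f g).symm

variable {m : ℕ} {f g : Fin m → R}

lemma comp_perm_eq_of_sum_mul_eq (hf : StrictMono f) (hg : Antitone g)
    {s : Equiv.Perm (Fin m)} (h : ∑ i, f i * g (s i) = ∑ i, f i * g i) : g ∘ s = g := by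
  have hvary : Antivary f (g ∘ s) :=
    (hf.monotone.antivary hg).sum_mul_eq_sum_mul_comp_perm_iff.1 h
  have hgs : Antitone (g ∘ s) := fun i j hij => by
    by_contra! hlt
    exact (hf (hij.lt_of_ne fun heq => hlt.ne (congrArg (g ∘ s) heq))).not_ge (hvary hlt)
  exact Tuple.unique_antitone (τ := 1) hgs hg

theorem apply_eq_apply_of_dotProduct_mulVec_eq {D : Matrix (Fin m) (Fin m) R}
    (hf : StrictMono f) (hg : Antitone g) (hD : D ∈ doublyStochastic R (Fin m))
    (h : f ⬝ᵥ (D *ᵥ g) = f ⬝ᵥ g) {k l : Fin m} (hkl : D k l ≠ 0) : g k = g l := by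
  obtain ⟨w, hw_nonneg, hw_sum, rfl⟩ := exists_eq_sum_perm_of_mem_doublyStochastic hD
  have hle : ∀ s ∈ univ, w s * (f ⬝ᵥ g) ≤ w s * ∑ i, f i * g (s i) := fun s _ =>
    mul_le_mul_of_nonneg_left (hf.monotone.antivary hg).sum_mul_le_sum_mul_comp_perm
      (hw_nonneg s)
  have heq : ∀ s ∈ univ, w s * (f ⬝ᵥ g) = w s * ∑ i, f i * g (s i) := by
    rw [← sum_eq_sum_iff_of_le hle, ← sum_mul, hw_sum, one_mul, ← h,
      dotProduct_sum_smul_permMatrix_mulVec]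
  obtain ⟨s, -, hs⟩ : ∃ s ∈ univ, (w s • s.permMatrix R) k l ≠ 0 :=
    exists_ne_zero_of_sum_ne_zero (by rwa [Matrix.sum_apply] at hkl)
  obtain ⟨hws, rfl⟩ : w s ≠ 0 ∧ s k = l := by
    simpa [Equiv.Perm.permMatrix, PEquiv.toMatrix_apply, and_comm] using hs
  have hgs : g ∘ s = g :=
    comp_perm_eq_of_sum_mul_eq hf hg (mul_left_cancel₀ hws (heq s (mem_univ s))).symm
  exact (congrFun hgs k).symm

end Rearrangement

section Diagonal

variable {n : Type*}

/-- Diagonal matrices with real entries in decreasing order: the states that are already sorted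
with respect to the reference basis. -/
def IsAntitoneDiagonal [Preorder n] [DecidableEq n] (M : Matrix n n ℂ) : Prop :=
  ∃ d : n → ℝ, Antitone d ∧ M = diagonal fun k => (d k : ℂ)

lemma IsAntitoneDiagonal.sum [Preorder n] [DecidableEq n] {κ : Type*} {s : Finset κ}
    {M : κ → Matrix n n ℂ} (h : ∀ a ∈ s, IsAntitoneDiagonal (M a)) :
    IsAntitoneDiagonal (∑ a ∈ s, M a) := by
  choose! d hd hM using h
  refine ⟨fun k => ∑ a ∈ s, d a k, fun i j hij => sum_le_sum fun a ha => hd a ha hij, ?_⟩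
  ext i j
  rw [sum_congr rfl hM, Matrix.sum_apply]
  by_cases hij : i = j <;> simp [hij]

lemma IsAntitoneDiagonal.smul [Preorder n] [DecidableEq n] {M : Matrix n n ℂ}
    (h : IsAntitoneDiagonal M) {c : ℝ} (hc : 0 ≤ c) : IsAntitoneDiagonal ((c : ℂ) • M) := by
  obtain ⟨d, hd, rfl⟩ := h
  refine ⟨fun k => c * d k, hd.const_mul hc, ?_⟩
  simp [← diagonal_smul, Pi.smul_def]

variable [Fintype n]

/-- The weighted diagonal sum `∑ₖ gₖ Re Mₖₖ`, i.e. the mean energy of `M` for the level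
energies `g`. -/
def levelEnergy (g : n → ℝ) : Matrix n n ℂ →ₗ[ℝ] ℝ where
  toFun M := g ⬝ᵥ fun k => (M k k).re
  map_add' M N := by simp [dotProduct, mul_add, sum_add_distrib]
  map_smul' c M := by simp [dotProduct, mul_sum, mul_left_comm]

lemma levelEnergy_apply (g : n → ℝ) (M : Matrix n n ℂ) :
    levelEnergy g M = g ⬝ᵥ fun k => (M k k).re := rfl

lemma levelEnergy_diagonal [DecidableEq n] (g d : n → ℝ) :
    levelEnergy g (diagonal fun k => (d k : ℂ)) = g ⬝ᵥ d := by
  simp [levelEnergy_apply]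

lemma levelEnergy_const (c : ℝ) (M : Matrix n n ℂ) :
    levelEnergy (fun _ => c) M = M.trace.re * c := by
  rw [levelEnergy_apply, dotProduct, ← mul_sum, mul_comm, trace, Complex.re_sum]
  rfl

lemma levelEnergy_le_levelEnergy {g g' : n → ℝ} (h : g ≤ g') {M : Matrix n n ℂ}
    (hM : M.PosSemidef) : levelEnergy g M ≤ levelEnergy g' M :=
  sum_le_sum fun k _ =>
    mul_le_mul_of_nonneg_right (h k) (Complex.nonneg_iff.1 hM.diag_nonneg).1

variable [DecidableEq n]

lemma map_normSq_mem_doublyStochastic {X : Matrix n n ℂ} (hX : X ∈ unitaryGroup n ℂ) :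
    X.map Complex.normSq ∈ doublyStochastic ℝ n := by
  refine mem_doublyStochastic_iff_sum.2 ⟨fun _ _ => Complex.normSq_nonneg _, fun i => ?_,
    fun j => ?_⟩
  · have h := congrFun₂ (mem_unitaryGroup_iff.1 hX) i i
    simp only [mul_apply, star_apply, RCLike.star_def, Complex.mul_conj, one_apply_eq] at h
    exact_mod_cast h
  · have h := congrFun₂ (mem_unitaryGroup_iff'.1 hX) j j
    simp only [mul_apply, star_apply, RCLike.star_def, mul_comm _ (X _ j), Complex.mul_conj,
      one_apply_eq] at h
    exact_mod_cast h

lemma mul_diagonal_mul_conjTranspose_apply {α : Type*} [CommSemiring α] [StarRing α]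
    (X : Matrix n n α) (d : n → α) (i j : n) :
    (X * diagonal d * Xᴴ) i j = ∑ k, d k * (X i k * star (X j k)) := by
  rw [mul_apply]
  exact sum_congr rfl fun k _ => by rw [mul_diagonal, conjTranspose_apply]; ring

lemma levelEnergy_mul_diagonal_mul_conjTranspose (g d : n → ℝ) (X : Matrix n n ℂ) :
    levelEnergy g (X * diagonal (fun k => (d k : ℂ)) * Xᴴ) =
      g ⬝ᵥ (X.map Complex.normSq *ᵥ d) := by
  rw [levelEnergy_apply]
  congr 1
  ext k
  simp [mul_diagonal_mul_conjTranspose_apply, Complex.mul_conj, mulVec, dotProduct, mul_comm]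

end Diagonal

lemma conjTranspose_mul_conj_mul {n : Type*} [Fintype n] [DecidableEq n] {X : Matrix n n ℂ}
    (hX : X ∈ unitaryGroup n ℂ) (M : Matrix n n ℂ) : Xᴴ * (X * M * Xᴴ) * X = M := by
  have h : Xᴴ * X = 1 := mem_unitaryGroup_iff'.1 hX
  rw [mul_assoc X M, ← mul_assoc Xᴴ X, h, one_mul, mul_assoc, h, mul_one]

section Sorting

variable {m : ℕ}

lemma mul_diagonal_mul_conjTranspose_eq_of_levelEnergy_eq {g d : Fin m → ℝ}
    (hg : StrictMono g) (hd : Antitone d) {X : Matrix (Fin m) (Fin m) ℂ}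
    (hX : X ∈ unitaryGroup (Fin m) ℂ)
    (h : levelEnergy g (X * diagonal (fun k => (d k : ℂ)) * Xᴴ) = g ⬝ᵥ d) :
    X * diagonal (fun k => (d k : ℂ)) * Xᴴ = diagonal fun k => (d k : ℂ) := by
  rw [levelEnergy_mul_diagonal_mul_conjTranspose] at h
  have hcomm : X * diagonal (fun k => (d k : ℂ)) = diagonal (fun k => (d k : ℂ)) * X := by
    ext k l
    rw [mul_diagonal, diagonal_mul, mul_comm]
    by_cases hkl : X k l = 0
    · simp [hkl]
    · rw [apply_eq_apply_of_dotProduct_mulVec_eq hg hd (map_normSq_mem_doublyStochastic hX) h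
        (k := k) (l := l) (by simpa using hkl)]
  rw [hcomm, mul_assoc, ← star_eq_conjTranspose, mem_unitaryGroup_iff.1 hX, mul_one]

theorem exists_unitary_isAntitoneDiagonal {M : Matrix (Fin m) (Fin m) ℂ} (hM : M.IsHermitian) :
    ∃ X ∈ unitaryGroup (Fin m) ℂ, IsAntitoneDiagonal (X * M * Xᴴ) := by
  let E : Matrix (Fin m) (Fin m) ℂ := hM.eigenvectorUnitary
  let s : Equiv.Perm (Fin m) := Tuple.sort fun i => -hM.eigenvalues i
  have hE : Eᴴ * E = 1 := mem_unitaryGroup_iff'.1 hM.eigenvectorUnitary.2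
  have hdiag : Eᴴ * M * E = diagonal fun i => (hM.eigenvalues i : ℂ) :=
    (Unitary.conjStarAlgAut_star_apply _ _).symm.trans hM.conjStarAlgAut_star_eigenvectorUnitary
  refine ⟨Eᴴ.submatrix s id, mem_unitaryGroup_iff.2 ?_, hM.eigenvalues ∘ s, ?_, ?_⟩
  · rw [star_eq_conjTranspose, conjTranspose_submatrix, conjTranspose_conjTranspose,
      ← submatrix_mul _ _ _ _ _ Function.bijective_id, hE, submatrix_one_equiv]
  · exact fun i j hij => neg_le_neg_iff.1 (Tuple.monotone_sort (fun i => -hM.eigenvalues i) hij)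
  · calc Eᴴ.submatrix s id * M * (Eᴴ.submatrix s id)ᴴ = (Eᴴ * M * E).submatrix s s := by
          rw [conjTranspose_submatrix, conjTranspose_conjTranspose,
            submatrix_mul _ _ _ _ _ Function.bijective_id,
            submatrix_mul _ _ _ _ _ Function.bijective_id, submatrix_id_id]
      _ = _ := by rw [hdiag, submatrix_diagonal_equiv]; rfl

theorem isAntitoneDiagonal_iff_forall_levelEnergy_le {g : Fin m → ℝ} (hg : StrictMono g)
    {M : Matrix (Fin m) (Fin m) ℂ} (hM : M.IsHermitian) :
    IsAntitoneDiagonal M ↔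
      ∀ X ∈ unitaryGroup (Fin m) ℂ, levelEnergy g M ≤ levelEnergy g (X * M * Xᴴ) := by
  constructor
  · rintro ⟨d, hd, rfl⟩ X hX
    rw [levelEnergy_diagonal, levelEnergy_mul_diagonal_mul_conjTranspose]
    exact dotProduct_le_dotProduct_mulVec_of_antivary (hg.monotone.antivary hd)
      (map_normSq_mem_doublyStochastic hX)
  · intro hmin
    obtain ⟨X, hX, d, hd, hXM⟩ := exists_unitary_isAntitoneDiagonal hM
    have hMX : M = Xᴴ * diagonal (fun k => (d k : ℂ)) * Xᴴᴴ := by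
      rw [← hXM, conjTranspose_conjTranspose, conjTranspose_mul_conj_mul hX]
    have hXinv : Xᴴ ∈ unitaryGroup (Fin m) ℂ := Unitary.star_mem hX
    refine ⟨d, hd, ?_⟩
    rw [hMX]
    refine mul_diagonal_mul_conjTranspose_eq_of_levelEnergy_eq hg hd hXinv (le_antisymm ?_ ?_)
    · rw [← hMX, ← levelEnergy_diagonal, ← hXM]
      exact hmin X hX
    · rw [levelEnergy_mul_diagonal_mul_conjTranspose]
      exact dotProduct_le_dotProduct_mulVec_of_antivary (hg.monotone.antivary hd)
        (map_normSq_mem_doublyStochastic hXinv)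

end Sorting

section Frame

variable {n : ℕ}

/-- The matrix whose `k`-th column is `v k`. -/
def frame {ι κ : Type*} (v : κ → ι → ℂ) : Matrix ι κ ℂ :=
  (of v)ᵀ

lemma onFam_iff_frame_mem_unitaryGroup {ι : Type*} [Fintype ι] [DecidableEq ι] {v : ι → ι → ℂ} :
    ONFam v ↔ frame v ∈ unitaryGroup ι ℂ := by
  rw [mem_unitaryGroup_iff', ← Matrix.ext_iff]
  exact forall₂_congr fun i j => by
    simp only [one_apply, frame, star_eq_conjTranspose, mul_apply, conjTranspose_apply,
      transpose_apply, of_apply, dotProduct, Pi.star_apply]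

lemma matElem_frame {ι κ : Type*} [Fintype ι] (M : Matrix ι ι ℂ) (v : κ → ι → ℂ) (i j : κ) :
    matElem M (v i) (v j) = ((frame v)ᴴ * M * frame v) i j := by
  rw [Matrix.mul_assoc, mul_apply']
  rfl

lemma sum_smul_ketbra {ι κ : Type*} [Fintype ι] [Fintype κ] [DecidableEq κ] (c : κ → ℂ)
    (v : κ → ι → ℂ) :
    ∑ k, c k • ketbra (v k) (v k) = frame v * diagonal c * (frame v)ᴴ := by
  ext i j
  simp only [Matrix.sum_apply, Matrix.smul_apply, ketbra, vecMulVec_apply, mul_apply (M := _ * _),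
    mul_diagonal, frame, conjTranspose_apply, transpose_apply, of_apply, Pi.star_apply,
    smul_eq_mul]
  exact sum_congr rfl fun k _ => by ring

lemma expHam_eq_frame_mul_diagonal (ε : Fin n → ℝ) (v : Fin n → Fin n → ℂ) (t : ℝ) :
    expHam ε v t =
      frame v * diagonal (fun k => (Real.exp (t * ε k) : ℂ)) * (frame v)ᴴ :=
  sum_smul_ketbra _ v

lemma isHermitian_expHam (ε : Fin n → ℝ) (v : Fin n → Fin n → ℂ) (t : ℝ) :
    (expHam ε v t).IsHermitian := by
  rw [expHam_eq_frame_mul_diagonal]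
  exact isHermitian_mul_mul_conjTranspose _
    (isHermitian_diagonal_of_self_adjoint _ (funext fun k => Complex.conj_ofReal _))

lemma expHam_mul_expHam (ε : Fin n → ℝ) {v : Fin n → Fin n → ℂ} (hv : ONFam v) (s t : ℝ) :
    expHam ε v s * expHam ε v t = expHam ε v (s + t) := by
  have h : (frame v)ᴴ * frame v = 1 :=
    mem_unitaryGroup_iff'.1 (onFam_iff_frame_mem_unitaryGroup.1 hv)
  simp only [expHam_eq_frame_mul_diagonal, add_mul, Real.exp_add, Complex.ofReal_mul,
    ← diagonal_mul_diagonal]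
  rw [mul_assoc, ← mul_assoc _ᴴ, ← mul_assoc _ᴴ, h, one_mul]
  simp only [mul_assoc]

lemma expHam_zero (ε : Fin n → ℝ) {v : Fin n → Fin n → ℂ} (hv : ONFam v) :
    expHam ε v 0 = 1 := by
  simp only [expHam_eq_frame_mul_diagonal, zero_mul, Real.exp_zero, Complex.ofReal_one,
    diagonal_one, mul_one]
  exact mem_unitaryGroup_iff.1 (onFam_iff_frame_mem_unitaryGroup.1 hv)

end Frame

section Utility

variable {n : ℕ}

lemma strictMono_exp_mul_div {ι : Type*} [Preorder ι] {r : ℝ} (hr : r ≠ 0) {ε : ι → ℝ}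
    (hε : StrictMono ε) :
    StrictMono fun k => Real.exp (r * ε k) / r := by
  intro i j hij
  rcases hr.lt_or_gt with h | h
  · exact div_lt_div_of_neg_of_lt h (Real.exp_lt_exp.2 (mul_lt_mul_of_neg_left (hε hij) h))
  · exact div_lt_div_of_pos_right (Real.exp_lt_exp.2 (mul_lt_mul_of_pos_left (hε hij) h)) h

lemma expUtility_half (r a b c : ℝ) :
    expUtility r (1 / 2 * a + (1 - 1 / 2) * b - c) =
      r⁻¹ - Real.exp (-r / 2 * a) * Real.exp (-r / 2 * b) * (Real.exp (r * c) / r) := by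
  have h : -r * (1 / 2 * a + (1 - 1 / 2) * b - c) = -r / 2 * a + -r / 2 * b + r * c := by ring
  rw [expUtility, h, Real.exp_add, Real.exp_add]
  ring

lemma sum_re_mul_eq_levelEnergy {ι : Type*} [Fintype ι] (g : ι → ℝ) (R X : Matrix ι ι ℂ) :
    ∑ i, ∑ j, ∑ k, (R i j * Xᴴ j k * X k i).re * g k = levelEnergy g (X * R * Xᴴ) := by
  rw [levelEnergy_apply, dotProduct]
  simp only [mul_apply, sum_mul, Complex.re_sum, mul_sum]
  rw [sum_comm_cycle]
  exact sum_congr rfl fun k _ => sum_comm.trans <| sum_congr rfl fun j _ =>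
    sum_congr rfl fun i _ => by rw [mul_comm, mul_rotate (X k i)]

/-- The value `Tr ρ / r - ∑ₖ (exp (r εₖ) / r) ⟨k|W ρ W†|k⟩` that the exponential utility takes on
the unitary encoded by `W = X e^{-r H_S / 2}`, where `X = v† U` is the unitary `U` read in the
energy basis `v`. -/
def frameUtility (r : ℝ) (ε : Fin n → ℝ) (W : Matrix (Fin n) (Fin n) ℂ) :
    Matrix (Fin n) (Fin n) ℂ →ₗ[ℝ] ℝ where
  toFun ρ := ρ.trace.re / r - levelEnergy (fun k => Real.exp (r * ε k) / r) (W * ρ * Wᴴ)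
  map_add' ρ σ := by simp [mul_add, add_mul, add_div, add_sub_add_comm]
  map_smul' c ρ := by simp [mul_sub, mul_div_assoc]

lemma frameUtility_apply (r : ℝ) (ε : Fin n → ℝ) (W ρ : Matrix (Fin n) (Fin n) ℂ) :
    frameUtility r ε W ρ =
      ρ.trace.re / r - levelEnergy (fun k => Real.exp (r * ε k) / r) (W * ρ * Wᴴ) := rfl

lemma sum_re_mul_expUtility (r : ℝ) (ε : Fin n → ℝ) (R X : Matrix (Fin n) (Fin n) ℂ) :
    ∑ i, ∑ j, ∑ k, (R i j * Xᴴ j k * X k i).re *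
        expUtility r (1 / 2 * ε i + (1 - 1 / 2) * ε j - ε k) =
      (X * R * Xᴴ).trace.re / r - levelEnergy (fun k => Real.exp (r * ε k) / r)
        (X * (diagonal (fun k => (Real.exp (-r / 2 * ε k) : ℂ)) * R *
          diagonal (fun k => (Real.exp (-r / 2 * ε k) : ℂ))) * Xᴴ) := by
  rw [div_eq_mul_inv _ r, ← levelEnergy_const, ← sum_re_mul_eq_levelEnergy,
    ← sum_re_mul_eq_levelEnergy]
  simp only [← sum_sub_distrib]
  refine sum_congr rfl fun i _ => sum_congr rfl fun j _ => sum_congr rfl fun k _ => ?_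
  rw [mul_diagonal, diagonal_mul, expUtility_half]
  simp only [Complex.mul_re, Complex.mul_im, Complex.ofReal_re, Complex.ofReal_im]
  ring

lemma trace_mul_mul_conjTranspose_of_unitary {ι : Type*} [Fintype ι] [DecidableEq ι]
    {X : Matrix ι ι ℂ} (hX : X ∈ unitaryGroup ι ℂ) (M : Matrix ι ι ℂ) :
    (X * M * Xᴴ).trace = M.trace := by
  rw [trace_mul_comm, ← mul_assoc, ← star_eq_conjTranspose, mem_unitaryGroup_iff'.1 hX, one_mul]

lemma expUtil_expUtility (r : ℝ) (ε : Fin n → ℝ) {v : Fin n → Fin n → ℂ} (hv : ONFam v)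
    (ρ : Matrix (Fin n) (Fin n) ℂ) {U : Matrix (Fin n) (Fin n) ℂ}
    (hU : U ∈ unitaryGroup (Fin n) ℂ) :
    expUtil (expUtility r) (1 / 2) ε v ρ U =
      frameUtility r ε ((frame v)ᴴ * U * expHam ε v (-r / 2)) ρ := by
  have hv' := onFam_iff_frame_mem_unitaryGroup.1 hv
  have hvU : (frame v)ᴴ * U ∈ unitaryGroup (Fin n) ℂ := mul_mem (Unitary.star_mem hv') hU
  have hcancel : (frame v)ᴴ * U * frame v * (frame v)ᴴ = (frame v)ᴴ * U := by
    rw [mul_assoc, ← star_eq_conjTranspose, mem_unitaryGroup_iff.1 hv', mul_one]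
  have hconj : ((frame v)ᴴ * U * frame v)ᴴ = (frame v)ᴴ * Uᴴ * frame v := by
    simp only [conjTranspose_mul, conjTranspose_conjTranspose, mul_assoc]
  have hrot : (frame v)ᴴ * U * frame v * ((frame v)ᴴ * ρ * frame v) *
      ((frame v)ᴴ * U * frame v)ᴴ = (frame v)ᴴ * U * ρ * ((frame v)ᴴ * U)ᴴ := by
    conv_rhs => rw [← hcancel]
    simp only [conjTranspose_mul, conjTranspose_conjTranspose, mul_assoc]
  simp only [expUtil, matElem_frame]
  rw [← hconj, sum_re_mul_expUtility, frameUtility_apply, hrot,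
    trace_mul_mul_conjTranspose_of_unitary hvU, conjTranspose_mul _ (expHam _ _ _),
    isHermitian_expHam, expHam_eq_frame_mul_diagonal]
  simp only [conjTranspose_mul, conjTranspose_conjTranspose, mul_assoc]

end Utility

section OptimalUtility

variable {n : ℕ} {r : ℝ} {ε : Fin n → ℝ} {v : Fin n → Fin n → ℂ}
  {ρ X : Matrix (Fin n) (Fin n) ℂ}

lemma optUtil_eq_iSup_frameUtility (hv : ONFam v) (ρ : Matrix (Fin n) (Fin n) ℂ) :
    optUtil (expUtility r) (1 / 2) ε v ρ =
      ⨆ X : unitaryGroup (Fin n) ℂ, frameUtility r ε (X * expHam ε v (-r / 2)) ρ := by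
  let V : unitaryGroup (Fin n) ℂ := ⟨frame v, onFam_iff_frame_mem_unitaryGroup.1 hv⟩
  exact (Equiv.mulLeft V⁻¹).iSup_congr fun U => (expUtil_expUtility r ε hv ρ U.2).symm

lemma isAntitoneDiagonal_iff_forall_frameUtility_le (hr : r ≠ 0) (hε : StrictMono ε)
    (hρ : ρ.IsHermitian) (hX : X ∈ unitaryGroup (Fin n) ℂ) (E : Matrix (Fin n) (Fin n) ℂ) :
    IsAntitoneDiagonal ((X * E) * ρ * (X * E)ᴴ) ↔
      ∀ Y ∈ unitaryGroup (Fin n) ℂ, frameUtility r ε (Y * E) ρ ≤ frameUtility r ε (X * E) ρ := by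
  rw [isAntitoneDiagonal_iff_forall_levelEnergy_le (strictMono_exp_mul_div hr hε)
    (isHermitian_mul_mul_conjTranspose _ hρ)]
  simp only [frameUtility_apply, sub_le_sub_iff_left]
  constructor
  · intro h Y hY
    have hYX : Y * Xᴴ * (X * E) = Y * E := by
      rw [mul_assoc, ← mul_assoc Xᴴ, ← star_eq_conjTranspose, mem_unitaryGroup_iff'.1 hX, one_mul]
    have hconj : Y * Xᴴ * ((X * E) * ρ * (X * E)ᴴ) * (Y * Xᴴ)ᴴ = (Y * E) * ρ * (Y * E)ᴴ := by
      conv_rhs => rw [← hYX]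
      simp only [conjTranspose_mul, mul_assoc]
    exact hconj ▸ h _ (mul_mem hY (Unitary.star_mem hX))
  · intro h Z hZ
    have hconj : (Z * X * E) * ρ * (Z * X * E)ᴴ = Z * ((X * E) * ρ * (X * E)ᴴ) * Zᴴ := by
      simp only [conjTranspose_mul, mul_assoc]
    exact hconj ▸ h _ (mul_mem hZ hX)

lemma exists_isAntitoneDiagonal_tilt (hρ : ρ.IsHermitian) (t : ℝ) :
    ∃ X ∈ unitaryGroup (Fin n) ℂ,
      IsAntitoneDiagonal ((X * expHam ε v t) * ρ * (X * expHam ε v t)ᴴ) := by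
  obtain ⟨X, hX, h⟩ := exists_unitary_isAntitoneDiagonal
    (isHermitian_mul_mul_conjTranspose (expHam ε v t) hρ)
  refine ⟨X, hX, ?_⟩
  simpa only [conjTranspose_mul, mul_assoc] using h

lemma frameUtility_le_optUtil (hr : r ≠ 0) (hε : StrictMono ε) (hv : ONFam v)
    (hρ : ρ.IsHermitian) (hX : X ∈ unitaryGroup (Fin n) ℂ) :
    frameUtility r ε (X * expHam ε v (-r / 2)) ρ ≤ optUtil (expUtility r) (1 / 2) ε v ρ := by
  obtain ⟨X₀, hX₀, hsorted⟩ := exists_isAntitoneDiagonal_tilt (ε := ε) (v := v) hρ (-r / 2)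
  rw [optUtil_eq_iSup_frameUtility hv]
  refine le_ciSup (f := fun Y : unitaryGroup (Fin n) ℂ =>
    frameUtility r ε (Y * expHam ε v (-r / 2)) ρ)
    ⟨frameUtility r ε (X₀ * expHam ε v (-r / 2)) ρ, ?_⟩ ⟨X, hX⟩
  rintro _ ⟨Y, rfl⟩
  exact (isAntitoneDiagonal_iff_forall_frameUtility_le hr hε hρ hX₀ _).1 hsorted Y Y.2

theorem frameUtility_eq_optUtil_iff (hr : r ≠ 0) (hε : StrictMono ε) (hv : ONFam v)
    (hρ : ρ.IsHermitian) (hX : X ∈ unitaryGroup (Fin n) ℂ) :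
    frameUtility r ε (X * expHam ε v (-r / 2)) ρ = optUtil (expUtility r) (1 / 2) ε v ρ ↔
      IsAntitoneDiagonal
        ((X * expHam ε v (-r / 2)) * ρ * (X * expHam ε v (-r / 2))ᴴ) := by
  rw [isAntitoneDiagonal_iff_forall_frameUtility_le hr hε hρ hX]
  constructor
  · exact fun h Y hY => (frameUtility_le_optUtil hr hε hv hρ hY).trans_eq h.symm
  · refine fun h => le_antisymm (frameUtility_le_optUtil hr hε hv hρ hX) ?_
    rw [optUtil_eq_iSup_frameUtility hv]
    exact ciSup_le fun Y => h Y Y.2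

lemma optUtil_smul (hv : ONFam v) {c : ℝ} (hc : 0 ≤ c) (ρ : Matrix (Fin n) (Fin n) ℂ) :
    optUtil (expUtility r) (1 / 2) ε v ((c : ℂ) • ρ) =
      c * optUtil (expUtility r) (1 / 2) ε v ρ := by
  simp only [optUtil_eq_iSup_frameUtility hv, Complex.coe_smul, map_smul, smul_eq_mul,
    Real.mul_iSup_of_nonneg hc]

lemma exists_linearMap_optUtil_le (r : ℝ) (ε : Fin n → ℝ) (hv : ONFam v) :
    ∃ L : Matrix (Fin n) (Fin n) ℂ →ₗ[ℝ] ℝ,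
      ∀ ρ, ρ.PosSemidef → optUtil (expUtility r) (1 / 2) ε v ρ ≤ L ρ := by
  obtain ⟨c, hc⟩ := (Set.finite_range fun k => Real.exp (r * ε k) / r).bddBelow
  let E := expHam ε v (-r / 2)
  refine ⟨levelEnergy (fun _ => r⁻¹) -
    levelEnergy (fun _ => c) ∘ₗ LinearMap.mulRight ℝ Eᴴ ∘ₗ LinearMap.mulLeft ℝ E, fun ρ hρ => ?_⟩
  rw [optUtil_eq_iSup_frameUtility hv]
  refine ciSup_le fun ⟨X, hX⟩ => ?_
  have htrace : ((X * E) * ρ * (X * E)ᴴ).trace = (E * ρ * Eᴴ).trace := by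
    rw [← trace_mul_mul_conjTranspose_of_unitary hX (E * ρ * Eᴴ)]
    simp only [conjTranspose_mul, mul_assoc]
  calc frameUtility r ε (X * E) ρ
      ≤ ρ.trace.re / r - levelEnergy (fun _ => c) ((X * E) * ρ * (X * E)ᴴ) :=
        sub_le_sub_left (levelEnergy_le_levelEnergy (fun k => hc (Set.mem_range_self k))
          (hρ.mul_mul_conjTranspose_same _)) _
    _ = _ := by
        rw [levelEnergy_const, htrace, div_eq_mul_inv]
        simp [levelEnergy_const]

end OptimalUtility

section ConditionalOperator

variable {m a : Type*} [Fintype a]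

/-- The unnormalized conditional operator `⟨x|ρ|x⟩` left on the first factor when the second
one is found in `|x⟩`. -/
def condOp (x : a → ℂ) (ρ : Matrix (m × a) (m × a) ℂ) : Matrix m m ℂ :=
  of fun i j => matElem (ρ.submatrix (Prod.mk i) (Prod.mk j)) x x

lemma condOp_apply (x : a → ℂ) (ρ : Matrix (m × a) (m × a) ℂ) (i j : m) :
    condOp x ρ i j = matElem (ρ.submatrix (Prod.mk i) (Prod.mk j)) x x := rfl

lemma condOp_smul (c : ℂ) (x : a → ℂ) (ρ : Matrix (m × a) (m × a) ℂ) :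
    condOp (c • x) ρ = (Complex.normSq c : ℂ) • condOp x ρ := by
  ext i j
  simp only [condOp_apply, matElem, star_smul, mulVec_smul, smul_dotProduct, dotProduct_smul,
    Matrix.smul_apply, smul_eq_mul, ← Complex.mul_conj, RCLike.star_def]
  ring

lemma condOp_sum_kronecker {κ : Type*} [Fintype κ] (x : a → ℂ) (A : κ → Matrix m m ℂ)
    (C : κ → Matrix a a ℂ) :
    condOp x (∑ k, A k ⊗ₖ C k) = ∑ k, matElem (C k) x x • A k := by
  ext i j
  have hblock : (∑ k, A k ⊗ₖ C k).submatrix (Prod.mk i) (Prod.mk j) = ∑ k, A k i j • C k := by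
    ext c d
    simp [Matrix.sum_apply]
  simp only [condOp_apply, hblock, matElem, sum_mulVec, smul_mulVec, dotProduct_sum,
    dotProduct_smul, Matrix.sum_apply, Matrix.smul_apply, smul_eq_mul, mul_comm]

/-- The embedding `I ⊗ |x⟩` of the first factor into the product. -/
def ketEmbed (m : Type*) [DecidableEq m] (x : a → ℂ) : Matrix (m × a) m ℂ :=
  of fun p j => (1 : Matrix m m ℂ) p.1 j * x p.2

lemma condOp_eq_conjTranspose_mul_mul [Fintype m] [DecidableEq m] (x : a → ℂ)
    (ρ : Matrix (m × a) (m × a) ℂ) : condOp x ρ = (ketEmbed m x)ᴴ * ρ * ketEmbed m x := by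
  ext i j
  simp only [condOp_apply, ketEmbed, mul_apply, conjTranspose_apply, of_apply,
    Fintype.sum_prod_type, one_apply]
  simpa [matElem, dotProduct, mulVec, mul_sum, sum_mul, apply_ite, mul_assoc] using sum_comm

lemma posSemidef_condOp [Finite m] (x : a → ℂ) {ρ : Matrix (m × a) (m × a) ℂ}
    (hρ : ρ.PosSemidef) : (condOp x ρ).PosSemidef := by
  classical
  have := Fintype.ofFinite m
  rw [condOp_eq_conjTranspose_mul_mul]
  exact hρ.conjTranspose_mul_mul_same _

lemma kronecker_one_mul_ketEmbed [Fintype m] [DecidableEq m] [DecidableEq a] (W : Matrix m m ℂ)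
    (x : a → ℂ) : (W ⊗ₖ (1 : Matrix a a ℂ)) * ketEmbed m x = ketEmbed m x * W := by
  ext p j
  simp [ketEmbed, mul_apply, Fintype.sum_prod_type, one_apply, mul_comm]

lemma condOp_kronecker_one_mul_mul [Fintype m] [DecidableEq a] (x : a → ℂ) (W : Matrix m m ℂ)
    (ρ : Matrix (m × a) (m × a) ℂ) :
    condOp x ((W ⊗ₖ 1) * ρ * (W ⊗ₖ 1)ᴴ) = W * condOp x ρ * Wᴴ := by
  classical
  let K : Matrix (m × a) (m × a) ℂ := W ⊗ₖ 1
  have hadj : Kᴴ * ketEmbed m x = ketEmbed m x * Wᴴ := by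
    rw [conjTranspose_kronecker, conjTranspose_one, kronecker_one_mul_ketEmbed]
  calc condOp x (K * ρ * Kᴴ)
      = (Kᴴ * ketEmbed m x)ᴴ * ρ * (Kᴴ * ketEmbed m x) := by
        simp only [condOp_eq_conjTranspose_mul_mul, conjTranspose_mul, conjTranspose_conjTranspose,
          Matrix.mul_assoc]
    _ = W * condOp x ρ * Wᴴ := by
        simp only [hadj, condOp_eq_conjTranspose_mul_mul, conjTranspose_mul,
          conjTranspose_conjTranspose, Matrix.mul_assoc]

end ConditionalOperator

section UnitaryRow

variable {κ : Type*} [Fintype κ] [DecidableEq κ]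

lemma exists_unitary_row_eq {x : κ → ℂ} (hx : star x ⬝ᵥ x = 1) (a : κ) :
    ∃ V ∈ unitaryGroup κ ℂ, V a = x := by
  have hon : Orthonormal ℂ (({a} : Set κ).domRestrict
      fun _ => (WithLp.toLp 2 x : EuclideanSpace ℂ κ)) := by
    rw [orthonormal_iff_ite]
    rintro ⟨i, rfl⟩ ⟨j, rfl⟩
    rwa [if_pos rfl, Set.domRestrict_apply, EuclideanSpace.inner_toLp_toLp, dotProduct_comm]
  obtain ⟨b, hb⟩ := hon.exists_orthonormalBasis_extension_of_card_eq (by simp)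
  refine ⟨of fun i j => b i j, mem_unitaryGroup_iff.2 ?_, congrArg WithLp.ofLp (hb a rfl)⟩
  ext i j
  have hij : ∑ k, b i k * star (b j k) = if j = i then 1 else 0 := by
    rw [← orthonormal_iff_ite.1 b.orthonormal j i, PiLp.inner_apply]
    rfl
  simpa only [Matrix.mul_apply, Matrix.one_apply, of_apply, star_eq_conjTranspose,
    conjTranspose_apply, eq_comm (a := j)] using hij

lemma exists_unitary_row_smul_eq {x : κ → ℂ} (hx : x ≠ 0) :
    ∃ V ∈ unitaryGroup κ ℂ, ∃ a, ∃ c : ℂ, x = c • V a := by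
  obtain ⟨a, -⟩ := Function.ne_iff.1 hx
  let y : EuclideanSpace ℂ κ := WithLp.toLp 2 x
  have hy : (‖y‖ : ℂ) ≠ 0 :=
    Complex.ofReal_ne_zero.2 (norm_ne_zero_iff.2 fun h => hx (congrArg WithLp.ofLp h))
  have hnorm : star x ⬝ᵥ x = (‖y‖ : ℂ) ^ 2 := by
    rw [dotProduct_comm, ← EuclideanSpace.inner_toLp_toLp]
    exact inner_self_eq_norm_sq_to_K y
  obtain ⟨V, hV, hVa⟩ := exists_unitary_row_eq (x := (‖y‖ : ℂ)⁻¹ • x)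
    (by simp [hnorm]; field_simp) a
  exact ⟨V, hV, a, ‖y‖, by rw [hVa, smul_inv_smul₀ hy]⟩

end UnitaryRow

section DaemonicGain

variable {dS dA : ℕ} {ρSA : Matrix (Fin dS × Fin dA) (Fin dS × Fin dA) ℂ}

lemma condUnnorm_eq_condOp (w : Fin dA → Fin dA → ℂ)
    (ρSA : Matrix (Fin dS × Fin dA) (Fin dS × Fin dA) ℂ) (a : Fin dA) :
    condUnnorm w ρSA a = condOp (w a) ρSA := by
  ext i j
  simp only [condUnnorm, of_apply, condOp_apply, matElem, dotProduct, mulVec, submatrix_apply,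
    mul_sum, Pi.star_apply]
  exact sum_congr rfl fun c _ => sum_congr rfl fun d _ => by ring

lemma sum_condOp_row {V : Matrix (Fin dA) (Fin dA) ℂ} (hV : V ∈ unitaryGroup (Fin dA) ℂ)
    (ρSA : Matrix (Fin dS × Fin dA) (Fin dS × Fin dA) ℂ) :
    ∑ a, condOp (V a) ρSA = ptraceA ρSA := by
  have hcol : ∀ c d, ∑ a, star (V a c) * V a d = (1 : Matrix (Fin dA) (Fin dA) ℂ) c d :=
    fun c d => congrFun₂ (mem_unitaryGroup_iff'.1 hV) c d
  ext i j
  calc (∑ a, condOp (V a) ρSA) i j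
      = ∑ a, ∑ c, ∑ d, ρSA (i, c) (j, d) * (star (V a c) * V a d) := by
        simp only [Matrix.sum_apply, condOp_apply, matElem, dotProduct, mulVec, submatrix_apply,
          mul_sum, Pi.star_apply, mul_left_comm]
    _ = ∑ c, ∑ d, ρSA (i, c) (j, d) * (1 : Matrix (Fin dA) (Fin dA) ℂ) c d := by
        simp only [← hcol, mul_sum]
        rw [sum_comm]
        exact sum_congr rfl fun c _ => sum_comm
    _ = ptraceA ρSA i j := by simp [one_apply, ptraceA]

lemma posSemidef_ptraceA (h : ρSA.PosSemidef) : (ptraceA ρSA).PosSemidef := by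
  rw [← sum_condOp_row (one_mem _)]
  exact posSemidef_sum _ fun a _ => posSemidef_condOp _ h

variable {r : ℝ} {ε : Fin dS → ℝ} {v : Fin dS → Fin dS → ℂ}

lemma daemonicUtil_eq_sum_optUtil (hv : ONFam v) (h : ρSA.PosSemidef)
    (w : Fin dA → Fin dA → ℂ) :
    daemonicUtil (expUtility r) (1 / 2) ε v w ρSA =
      ∑ a, optUtil (expUtility r) (1 / 2) ε v (condOp (w a) ρSA) := by
  refine sum_congr rfl fun a _ => ?_
  have hpsd : (condUnnorm w ρSA a).PosSemidef :=
    condUnnorm_eq_condOp w ρSA a ▸ posSemidef_condOp _ h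
  have hp : 0 ≤ prob w ρSA a := (Complex.nonneg_iff.1 hpsd.trace_nonneg).1
  rw [← optUtil_smul hv hp, condState, ← condUnnorm_eq_condOp]
  congr 1
  rcases eq_or_ne (prob w ρSA a) 0 with h0 | h0
  · have htrace : (condUnnorm w ρSA a).trace = 0 :=
      Complex.ext h0 (Complex.nonneg_iff.1 hpsd.trace_nonneg).2.symm
    simp [hpsd.trace_eq_zero_iff.1 htrace]
  · exact smul_inv_smul₀ (Complex.ofReal_ne_zero.2 h0) _

lemma frameUtility_ptraceA_eq_sum (W : Matrix (Fin dS) (Fin dS) ℂ)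
    {V : Matrix (Fin dA) (Fin dA) ℂ} (hV : V ∈ unitaryGroup (Fin dA) ℂ) :
    frameUtility r ε W (ptraceA ρSA) = ∑ a, frameUtility r ε W (condOp (V a) ρSA) := by
  rw [← sum_condOp_row hV, map_sum]

lemma optUtil_ptraceA_le_daemonicUtil (hr : r ≠ 0) (hε : StrictMono ε) (hv : ONFam v)
    (h : ρSA.PosSemidef) {V : Matrix (Fin dA) (Fin dA) ℂ} (hV : V ∈ unitaryGroup (Fin dA) ℂ) :
    optUtil (expUtility r) (1 / 2) ε v (ptraceA ρSA) ≤
      daemonicUtil (expUtility r) (1 / 2) ε v (fun a => V a) ρSA := by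
  rw [optUtil_eq_iSup_frameUtility hv, daemonicUtil_eq_sum_optUtil hv h]
  refine ciSup_le fun ⟨X, hX⟩ => ?_
  rw [frameUtility_ptraceA_eq_sum _ hV]
  exact sum_le_sum fun a _ =>
    frameUtility_le_optUtil hr hε hv (posSemidef_condOp _ h).isHermitian hX

lemma daemonicUtil_eq_optUtil_ptraceA_iff (hr : r ≠ 0) (hε : StrictMono ε) (hv : ONFam v)
    (h : ρSA.PosSemidef) {V : Matrix (Fin dA) (Fin dA) ℂ} (hV : V ∈ unitaryGroup (Fin dA) ℂ)
    {X : Matrix (Fin dS) (Fin dS) ℂ} (hX : X ∈ unitaryGroup (Fin dS) ℂ)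
    (hsorted : IsAntitoneDiagonal
      ((X * expHam ε v (-r / 2)) * ptraceA ρSA * (X * expHam ε v (-r / 2))ᴴ)) :
    daemonicUtil (expUtility r) (1 / 2) ε v (fun a => V a) ρSA =
        optUtil (expUtility r) (1 / 2) ε v (ptraceA ρSA) ↔
      ∀ a, IsAntitoneDiagonal
        ((X * expHam ε v (-r / 2)) * condOp (V a) ρSA * (X * expHam ε v (-r / 2))ᴴ) := by
  have hcond : ∀ a, (condOp (V a) ρSA).IsHermitian := fun a =>
    (posSemidef_condOp _ h).isHermitian
  rw [← (frameUtility_eq_optUtil_iff hr hε hv (posSemidef_ptraceA h).isHermitian hX).2 hsorted,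
    daemonicUtil_eq_sum_optUtil hv h, frameUtility_ptraceA_eq_sum _ hV, eq_comm,
    sum_eq_sum_iff_of_le fun a _ => frameUtility_le_optUtil hr hε hv (hcond a) hX]
  simp only [mem_univ, forall_const, frameUtility_eq_optUtil_iff hr hε hv (hcond _) hX]

lemma bddAbove_range_daemonicUtil (hv : ONFam v) (h : ρSA.PosSemidef) :
    BddAbove (Set.range fun V : unitaryGroup (Fin dA) ℂ =>
      daemonicUtil (expUtility r) (1 / 2) ε v
        (fun a => (V : Matrix (Fin dA) (Fin dA) ℂ) a) ρSA) := by
  obtain ⟨L, hL⟩ := exists_linearMap_optUtil_le r ε hv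
  refine ⟨L (ptraceA ρSA), ?_⟩
  rintro _ ⟨V, rfl⟩
  dsimp only
  rw [daemonicUtil_eq_sum_optUtil hv h, ← sum_condOp_row V.2, map_sum]
  exact sum_le_sum fun a _ => hL _ (posSemidef_condOp _ h)

lemma daemonicGain_eq_zero_iff_forall (hr : r ≠ 0) (hε : StrictMono ε) (hv : ONFam v)
    (h : ρSA.PosSemidef) :
    daemonicGain (expUtility r) (1 / 2) ε v ρSA = 0 ↔
      ∀ V ∈ unitaryGroup (Fin dA) ℂ, daemonicUtil (expUtility r) (1 / 2) ε v (fun a => V a) ρSA =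
        optUtil (expUtility r) (1 / 2) ε v (ptraceA ρSA) := by
  rw [daemonicGain, sub_eq_zero]
  constructor
  · exact fun hsup V hV => le_antisymm
      ((le_ciSup (bddAbove_range_daemonicUtil hv h) ⟨V, hV⟩).trans_eq hsup)
      (optUtil_ptraceA_le_daemonicUtil hr hε hv h hV)
  · exact fun hall => (iSup_congr fun ⟨V, hV⟩ => hall V hV).trans ciSup_const

theorem daemonicGain_eq_zero_iff_exists_sorting (hr : r ≠ 0) (hε : StrictMono ε) (hv : ONFam v)
    (h : ρSA.PosSemidef) :
    daemonicGain (expUtility r) (1 / 2) ε v ρSA = 0 ↔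
      ∃ X ∈ unitaryGroup (Fin dS) ℂ, ∀ x : Fin dA → ℂ, IsAntitoneDiagonal
        ((X * expHam ε v (-r / 2)) * condOp x ρSA * (X * expHam ε v (-r / 2))ᴴ) := by
  rw [daemonicGain_eq_zero_iff_forall hr hε hv h]
  constructor
  · intro hzero
    obtain ⟨X, hX, hsorted⟩ := exists_isAntitoneDiagonal_tilt (ε := ε) (v := v)
      (posSemidef_ptraceA h).isHermitian (-r / 2)
    refine ⟨X, hX, fun x => ?_⟩
    rcases eq_or_ne x 0 with rfl | hx
    · have hcond : condOp (0 : Fin dA → ℂ) ρSA = 0 := by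
        ext
        simp [condOp_apply, matElem]
      exact ⟨0, antitone_const, by simp [hcond]⟩
    · obtain ⟨V, hV, a, c, rfl⟩ := exists_unitary_row_smul_eq hx
      rw [condOp_smul, Matrix.mul_smul, Matrix.smul_mul]
      exact ((daemonicUtil_eq_optUtil_ptraceA_iff hr hε hv h hV hX hsorted).1 (hzero V hV) a).smul
        (Complex.normSq_nonneg c)
  · rintro ⟨X, hX, hall⟩ V hV
    refine (daemonicUtil_eq_optUtil_ptraceA_iff hr hε hv h hV hX ?_).2 fun a => hall _
    rw [← sum_condOp_row hV, mul_sum, sum_mul]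
    exact IsAntitoneDiagonal.sum fun a _ => hall _

end DaemonicGain

section SortedDecomposition

variable {m a : Type*}

lemma eq_zero_of_forall_matElem_self_eq_zero [Fintype a] {M : Matrix a a ℂ}
    (h : ∀ x, matElem M x x = 0) : M = 0 := by
  classical
  have hlin : toEuclideanLin M = 0 := by
    refine (inner_map_self_eq_zero _).1 fun x => ?_
    rw [← inner_conj_symm, EuclideanSpace.inner_eq_star_dotProduct, dotProduct_comm]
    exact (congrArg _ (h x.ofLp)).trans (map_zero _)
  exact (LinearEquiv.map_eq_zero_iff _).1 hlin

variable [DecidableEq m] {τ : Matrix (m × a) (m × a) ℂ}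

lemma submatrix_eq_zero_of_forall_isAntitoneDiagonal_condOp [Fintype a] [Preorder m]
    (h : ∀ x, IsAntitoneDiagonal (condOp x τ)) {i j : m} (hij : i ≠ j) :
    τ.submatrix (Prod.mk i) (Prod.mk j) = 0 := by
  refine eq_zero_of_forall_matElem_self_eq_zero fun x => ?_
  obtain ⟨d, -, hd⟩ := h x
  rw [← condOp_apply, hd, diagonal_apply_ne _ hij]

lemma eq_sum_single_kronecker [Fintype m]
    (hoff : ∀ i j, i ≠ j → τ.submatrix (Prod.mk i) (Prod.mk j) = 0) :
    τ = ∑ k, single k k 1 ⊗ₖ τ.submatrix (Prod.mk k) (Prod.mk k) := by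
  ext ⟨i, c⟩ ⟨j, d⟩
  rcases eq_or_ne i j with rfl | hij
  · simp [Matrix.sum_apply, single_apply]
  · have hzero : τ (i, c) (j, d) = 0 := congrFun₂ (hoff i j hij) c d
    rw [hzero, Matrix.sum_apply]
    exact (sum_eq_zero fun k _ => by simp [single_apply]; grind).symm

open scoped MatrixOrder in
theorem exists_antitone_eq_sum_single_kronecker [Fintype m] [Fintype a] [Preorder m]
    (hτ : τ.PosSemidef) (h : ∀ x, IsAntitoneDiagonal (condOp x τ)) :
    ∃ C : m → Matrix a a ℂ, (∀ k, (C k).PosSemidef) ∧ Antitone C ∧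
      τ = ∑ k, single k k 1 ⊗ₖ C k := by
  have hC : ∀ k, (τ.submatrix (Prod.mk k) (Prod.mk k)).PosSemidef := fun k => hτ.submatrix _
  refine ⟨_, hC, fun i j hij => ?_, eq_sum_single_kronecker fun i j =>
    submatrix_eq_zero_of_forall_isAntitoneDiagonal_condOp h⟩
  refine Matrix.le_iff.2 (.of_dotProduct_mulVec_nonneg
    ((hC i).isHermitian.sub (hC j).isHermitian) fun x => ?_)
  obtain ⟨d, hd, hcond⟩ := h x
  have hdiag : ∀ k, matElem (τ.submatrix (Prod.mk k) (Prod.mk k)) x x = d k := fun k => by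
    rw [← condOp_apply, hcond, diagonal_apply_eq]
  rw [sub_mulVec, dotProduct_sub, ← matElem, ← matElem, hdiag, hdiag, sub_nonneg]
  exact Complex.real_le_real.2 (hd hij)

end SortedDecomposition

section ExponentialTilt

variable {n : ℕ} {ε : Fin n → ℝ} {v : Fin n → Fin n → ℂ}

lemma expHam_neg_mul_expHam (hv : ONFam v) (t : ℝ) :
    expHam ε v (-t) * expHam ε v t = 1 := by
  rw [expHam_mul_expHam ε hv, neg_add_cancel, expHam_zero ε hv]

lemma expHam_neg_mul_conj_mul (hv : ONFam v) (t : ℝ) (M : Matrix (Fin n) (Fin n) ℂ) :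
    expHam ε v (-t) * (expHam ε v t * M * expHam ε v t) * expHam ε v (-t) = M := by
  have hinv : expHam ε v t * expHam ε v (-t) = 1 := by
    simpa only [neg_neg] using expHam_neg_mul_expHam (ε := ε) hv (-t)
  rw [mul_assoc (expHam ε v t), ← mul_assoc, ← mul_assoc, expHam_neg_mul_expHam hv, one_mul,
    mul_assoc, hinv, mul_one]

lemma conjTranspose_mul_single_mul (X : Matrix (Fin n) (Fin n) ℂ) (k : Fin n) :
    Xᴴ * single k k 1 * X = ketbra (star (X k)) (star (X k)) := by
  ext i j
  simp [ketbra, mul_apply, single_apply, vecMulVec_apply, ite_and]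

lemma onFam_star_row {X : Matrix (Fin n) (Fin n) ℂ} (hX : X ∈ unitaryGroup (Fin n) ℂ) :
    ONFam fun k => star (X k) :=
  onFam_iff_frame_mem_unitaryGroup.2 (Unitary.star_mem hX)

lemma posSemidef_expHam_mul_ketbra_mul (ε : Fin n → ℝ) (v : Fin n → Fin n → ℂ) (t : ℝ)
    (x : Fin n → ℂ) : (expHam ε v t * ketbra x x * expHam ε v t).PosSemidef := by
  simpa only [(isHermitian_expHam ε v t).eq, ketbra] using
    (posSemidef_vecMulVec_self_star x).mul_mul_conjTranspose_same (expHam ε v t)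

variable {a : Type*} [Fintype a]
  {ρ : Matrix (Fin n × a) (Fin n × a) ℂ}

lemma kronecker_one_conj_kronecker [DecidableEq a] (W A : Matrix (Fin n) (Fin n) ℂ)
    (C : Matrix a a ℂ) :
    (W ⊗ₖ 1) * (A ⊗ₖ C) * (W ⊗ₖ 1)ᴴ = (W * A * Wᴴ) ⊗ₖ C := by
  rw [conjTranspose_kronecker, conjTranspose_one, ← mul_kronecker_mul, ← mul_kronecker_mul,
    one_mul, mul_one]

open scoped MatrixOrder in
lemma isAntitoneDiagonal_tilt_condOp_sum_kronecker (hv : ONFam v) (t : ℝ)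
    {φ : Fin n → Fin n → ℂ} (hφ : ONFam φ) {C : Fin n → Matrix a a ℂ}
    (hC : ∀ k, (C k).PosSemidef) (hanti : Antitone C) (x : a → ℂ) :
    IsAntitoneDiagonal (((frame φ)ᴴ * expHam ε v (-t)) *
      condOp x (∑ k, (expHam ε v t * ketbra (φ k) (φ k) * expHam ε v t) ⊗ₖ C k) *
      ((frame φ)ᴴ * expHam ε v (-t))ᴴ) := by
  have hreal : ∀ k, matElem (C k) x x = (matElem (C k) x x).re := fun k =>
    Complex.eq_re_of_ofReal_le (r := 0) <| by
      rw [Complex.ofReal_zero]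
      exact (hC k).dotProduct_mulVec_nonneg x
  refine ⟨fun k => (matElem (C k) x x).re, fun i j hij => ?_, ?_⟩
  · have hdiff := (Matrix.le_iff.1 (hanti hij)).dotProduct_mulVec_nonneg x
    rw [sub_mulVec, dotProduct_sub, sub_nonneg] at hdiff
    exact (Complex.le_def.1 hdiff).1
  · have htilt : expHam ε v (-t) *
        condOp x (∑ k, (expHam ε v t * ketbra (φ k) (φ k) * expHam ε v t) ⊗ₖ C k) *
        expHam ε v (-t) = frame φ * diagonal (fun k => matElem (C k) x x) * (frame φ)ᴴ := by
      simp only [condOp_sum_kronecker, mul_sum, sum_mul, Matrix.mul_smul, Matrix.smul_mul,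
        expHam_neg_mul_conj_mul hv, sum_smul_ketbra]
    rw [conjTranspose_mul, conjTranspose_conjTranspose, (isHermitian_expHam ε v (-t)).eq]
    simp only [← hreal]
    rw [← conjTranspose_mul_conj_mul (onFam_iff_frame_mem_unitaryGroup.1 hφ) (diagonal _), ← htilt]
    simp only [mul_assoc]

open scoped MatrixOrder in
lemma exists_eq_sum_kronecker_of_forall_isAntitoneDiagonal (hv : ONFam v) (t : ℝ)
    (hρ : ρ.PosSemidef) {X : Matrix (Fin n) (Fin n) ℂ} (hX : X ∈ unitaryGroup (Fin n) ℂ)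
    (hsorted : ∀ x, IsAntitoneDiagonal
      ((X * expHam ε v (-t)) * condOp x ρ * (X * expHam ε v (-t))ᴴ)) :
    ∃ (φ : Fin n → Fin n → ℂ) (C : Fin n → Matrix a a ℂ), ONFam φ ∧ (∀ k, (C k).PosSemidef) ∧
      Antitone C ∧ ρ = ∑ k, (expHam ε v t * ketbra (φ k) (φ k) * expHam ε v t) ⊗ₖ C k := by
  classical
  let K : Matrix (Fin n × a) (Fin n × a) ℂ := (X * expHam ε v (-t)) ⊗ₖ 1
  let L : Matrix (Fin n × a) (Fin n × a) ℂ := (expHam ε v t * Xᴴ) ⊗ₖ 1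
  obtain ⟨C, hC, hanti, hτ⟩ := exists_antitone_eq_sum_single_kronecker
    (hρ.mul_mul_conjTranspose_same K) fun x => by
      rw [condOp_kronecker_one_mul_mul]
      exact hsorted x
  refine ⟨fun k => star (X k), C, onFam_star_row hX, hC, hanti, ?_⟩
  have hLK : L * K = 1 := by
    rw [← mul_kronecker_mul, one_mul, mul_assoc, ← mul_assoc Xᴴ, ← star_eq_conjTranspose,
      mem_unitaryGroup_iff'.1 hX, one_mul, expHam_mul_expHam ε hv, add_neg_cancel,
      expHam_zero ε hv, one_kronecker_one]
  have hterm : ∀ k, expHam ε v t * Xᴴ * single k k 1 * (expHam ε v t * Xᴴ)ᴴ =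
      expHam ε v t * ketbra (star (X k)) (star (X k)) * expHam ε v t := fun k => by
    rw [← conjTranspose_mul_single_mul, conjTranspose_mul, conjTranspose_conjTranspose,
      (isHermitian_expHam ε v t).eq]
    simp only [mul_assoc]
  calc ρ = (L * K) * ρ * (L * K)ᴴ := by rw [hLK, conjTranspose_one, one_mul, mul_one]
    _ = L * (K * ρ * Kᴴ) * Lᴴ := by simp only [conjTranspose_mul, mul_assoc]
    _ = _ := by
      rw [hτ, mul_sum, sum_mul]
      exact sum_congr rfl fun k _ => by rw [kronecker_one_conj_kronecker, hterm]

end ExponentialTilt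

section ZeroGain

variable {dS dA : ℕ} {r : ℝ} {ε : Fin dS → ℝ} {v : Fin dS → Fin dS → ℂ}
  {ρSA : Matrix (Fin dS × Fin dA) (Fin dS × Fin dA) ℂ}

open scoped MatrixOrder in
theorem daemonicGain_eq_zero_iff_exists_eq_sum_kronecker (hr : r ≠ 0) (hε : StrictMono ε)
    (hv : ONFam v) (h : ρSA.PosSemidef) :
    daemonicGain (expUtility r) (1 / 2) ε v ρSA = 0 ↔
      ∃ (φ : Fin dS → Fin dS → ℂ) (C : Fin dS → Matrix (Fin dA) (Fin dA) ℂ),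
        ONFam φ ∧ (∀ k, (C k).PosSemidef) ∧ Antitone C ∧
        ρSA = ∑ k, (expHam ε v (r / 2) * ketbra (φ k) (φ k) * expHam ε v (r / 2)) ⊗ₖ C k := by
  rw [daemonicGain_eq_zero_iff_exists_sorting hr hε hv h, neg_div]
  constructor
  · rintro ⟨X, hX, hsorted⟩
    exact exists_eq_sum_kronecker_of_forall_isAntitoneDiagonal hv (r / 2) h hX hsorted
  · rintro ⟨φ, C, hφ, hC, hanti, rfl⟩
    exact ⟨(frame φ)ᴴ, Unitary.star_mem (onFam_iff_frame_mem_unitaryGroup.1 hφ),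
      isAntitoneDiagonal_tilt_condOp_sum_kronecker hv (r / 2) hφ hC hanti⟩

lemma ptraceA_sum_kronecker {κ : Type*} [Fintype κ] (A : κ → Matrix (Fin dS) (Fin dS) ℂ)
    (C : κ → Matrix (Fin dA) (Fin dA) ℂ) :
    ptraceA (∑ k, A k ⊗ₖ C k) = ∑ k, (C k).trace • A k := by
  ext i j
  simp only [ptraceA, of_apply, Matrix.sum_apply, kroneckerMap_apply, Matrix.smul_apply,
    smul_eq_mul, trace, diag_apply, sum_mul]
  rw [sum_comm]
  simp only [mul_comm]

lemma expHam_neg_mul_ptraceA_mul (hv : ONFam v) (t : ℝ) (φ : Fin dS → Fin dS → ℂ)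
    (C : Fin dS → Matrix (Fin dA) (Fin dA) ℂ) :
    expHam ε v (-t) *
        ptraceA (∑ k, (expHam ε v t * ketbra (φ k) (φ k) * expHam ε v t) ⊗ₖ C k) *
        expHam ε v (-t) = ∑ k, (C k).trace • ketbra (φ k) (φ k) := by
  simp only [ptraceA_sum_kronecker, mul_sum, sum_mul, Matrix.mul_smul, Matrix.smul_mul,
    expHam_neg_mul_conj_mul hv]

lemma ofReal_re_trace_of_posSemidef {ι : Type*} [Fintype ι] {M : Matrix ι ι ℂ}
    (hM : M.PosSemidef) : (M.trace.re : ℂ) = M.trace :=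
  (Complex.eq_re_of_ofReal_le (r := 0) (by simpa using hM.trace_nonneg)).symm

open scoped MatrixOrder in
lemma antitone_re_trace {ι κ : Type*} [Fintype ι] [Preorder κ] {C : κ → Matrix ι ι ℂ}
    (hC : Antitone C) : Antitone fun k => (C k).trace.re := fun i j hij => by
  have hdiff := (Matrix.le_iff.1 (hC hij)).trace_nonneg
  rw [trace_sub, sub_nonneg] at hdiff
  exact (Complex.le_def.1 hdiff).1

lemma antitone_fin_iff_forall_succ {α : Type*} [Preorder α] {n : ℕ} {f : Fin n → α} :
    Antitone f ↔ ∀ (k : Fin n) (h : (k : ℕ) + 1 < n), f ⟨k + 1, h⟩ ≤ f k := by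
  cases n with
  | zero => exact ⟨fun _ k => k.elim0, fun _ k => k.elim0⟩
  | succ n =>
    exact Fin.antitone_iff_succ_le.trans
      ⟨fun hf k h => hf ⟨k, Nat.lt_of_succ_lt_succ h⟩, fun hf k => hf k.castSucc (by simp)⟩

open scoped MatrixOrder in
lemma antitone_iff_forall_posSemidef_sub_succ {ι : Type*} {n : ℕ} {C : Fin n → Matrix ι ι ℂ} :
    Antitone C ↔
      ∀ (k : Fin n) (h : (k : ℕ) + 1 < n), (C k - C ⟨k + 1, h⟩).PosSemidef := by
  simp only [antitone_fin_iff_forall_succ, Matrix.le_iff]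

end ZeroGain

section Separability

variable {ι : Type*} [Fintype ι] {M : Matrix ι ι ℂ}

lemma IsDensity.nonempty (h : IsDensity M) : Nonempty ι := by
  by_contra hempty
  rw [not_nonempty_iff] at hempty
  simpa [trace] using h.2

lemma exists_isDensity_smul_eq [Nonempty ι] (hM : M.PosSemidef) :
    ∃ σ, IsDensity σ ∧ M = (M.trace.re : ℂ) • σ := by
  classical
  have hre := ofReal_re_trace_of_posSemidef hM
  rcases eq_or_ne M.trace 0 with h0 | h0
  · let i := Classical.arbitrary ι
    refine ⟨diagonal (Pi.single i 1), ⟨PosSemidef.diagonal ?_, by simp⟩, ?_⟩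
    · exact Pi.single_nonneg.2 zero_le_one
    · simp [hM.trace_eq_zero_iff.1 h0]
  · refine ⟨M.trace⁻¹ • M, ⟨hM.smul ?_, ?_⟩, ?_⟩
    · exact inv_nonneg.2 hM.trace_nonneg
    · rw [trace_smul, smul_eq_mul, inv_mul_cancel₀ h0]
    · rw [hre, smul_inv_smul₀ h0]

lemma isSeparable_sum_kronecker {dS dA m : ℕ} {A : Fin m → Matrix (Fin dS) (Fin dS) ℂ}
    {C : Fin m → Matrix (Fin dA) (Fin dA) ℂ} (hA : ∀ k, (A k).PosSemidef)
    (hC : ∀ k, (C k).PosSemidef) (h : IsDensity (∑ k, A k ⊗ₖ C k)) :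
    IsSeparable (∑ k, A k ⊗ₖ C k) := by
  obtain ⟨i, a⟩ := h.nonempty
  have : Nonempty (Fin dS) := ⟨i⟩
  have : Nonempty (Fin dA) := ⟨a⟩
  choose σ hσ hAσ using fun k => exists_isDensity_smul_eq (hA k)
  choose τ hτ hCτ using fun k => exists_isDensity_smul_eq (hC k)
  refine ⟨m, fun k => (A k).trace.re * (C k).trace.re, σ, τ, fun k => ?_, ?_, hσ, hτ, ?_⟩
  · exact mul_nonneg (Complex.le_def.1 (hA k).trace_nonneg).1
      (Complex.le_def.1 (hC k).trace_nonneg).1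
  · rw [← Complex.ofReal_inj, Complex.ofReal_sum, Complex.ofReal_one, ← h.2, trace_sum]
    simp only [Complex.ofReal_mul, ofReal_re_trace_of_posSemidef (hA _),
      ofReal_re_trace_of_posSemidef (hC _), trace_kronecker]
  · refine sum_congr rfl fun k _ => (congrArg₂ (· ⊗ₖ ·) (hAσ k) (hCτ k)).trans ?_
    rw [smul_kronecker, kronecker_smul, smul_smul, Complex.ofReal_mul]

end Separability

/-- Theorem 1: for the exponential utility with `r ≠ 0` and `q = 1/2`,
the maximum daemonic gain vanishes iff `ρ_SA = ∑ₖ (e^{rH_S/2}|uₖ⟩⟨uₖ|e^{rH_S/2}) ⊗ C^A_k`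
with `C^A_k ≥ C^A_{k+1} ≥ 0`; in particular every such state is separable. -/
theorem stmt4 {dS dA : ℕ} (r : ℝ) (hr : r ≠ 0)
    (ε : Fin dS → ℝ) (hε : StrictMono ε)
    (v : Fin dS → Fin dS → ℂ) (hv : ONFam v)
    (ρSA : Matrix (Fin dS × Fin dA) (Fin dS × Fin dA) ℂ) (hρSA : IsDensity ρSA) :
    (daemonicGain (expUtility r) (1/2) ε v ρSA = 0 ↔
      ∃ (uvals : Fin dS → ℝ) (φ : Fin dS → Fin dS → ℂ)
        (C : Fin dS → Matrix (Fin dA) (Fin dA) ℂ),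
        ONFam φ ∧ Antitone uvals ∧
        (expHam ε v (-r/2) * ptraceA ρSA * expHam ε v (-r/2)
          = ∑ k, (uvals k : ℂ) • ketbra (φ k) (φ k)) ∧
        (∀ k, (C k).PosSemidef) ∧
        (∀ (k : Fin dS) (h : (k : ℕ) + 1 < dS), (C k - C ⟨(k : ℕ) + 1, h⟩).PosSemidef) ∧
        ρSA = ∑ k, (expHam ε v (r/2) * ketbra (φ k) (φ k) * expHam ε v (r/2)) ⊗ₖ C k) ∧
    (daemonicGain (expUtility r) (1/2) ε v ρSA = 0 → IsSeparable ρSA) := by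
  have hdecomp := daemonicGain_eq_zero_iff_exists_eq_sum_kronecker hr hε hv hρSA.1
  simp only [antitone_iff_forall_posSemidef_sub_succ] at hdecomp
  refine ⟨⟨fun hzero => ?_, ?_⟩, fun hzero => ?_⟩
  · obtain ⟨φ, C, hφ, hC, hsucc, rfl⟩ := hdecomp.1 hzero
    refine ⟨fun k => (C k).trace.re, φ, C, hφ,
      antitone_re_trace (antitone_iff_forall_posSemidef_sub_succ.2 hsucc), ?_, hC, hsucc, rfl⟩
    simp only [ofReal_re_trace_of_posSemidef (hC _), neg_div, expHam_neg_mul_ptraceA_mul hv]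
  · rintro ⟨-, φ, C, hφ, -, -, hC, hsucc, hρ⟩
    exact hdecomp.2 ⟨φ, C, hφ, hC, hsucc, hρ⟩
  · obtain ⟨φ, C, -, hC, -, rfl⟩ := hdecomp.1 hzero
    exact isSeparable_sum_kronecker (fun k => posSemidef_expHam_mul_ketbra_mul ε v _ (φ k)) hC hρSA

end Daemonic
end
end

section
/- Let d_S = 2, with ρ_S the density matrix with entries ρ_{11} = p, ρ_{22} = 1 − p, ρ_{12} = c, ρ_{21} = c* in the eigenbasis {|ε₁⟩, |ε₂⟩} of H_S, and let U be the unitary with columns (α, β) and (−β*, α*) where |α|² + |β|² = 1. Then for q = 1/2 and any utility u with u(0) = 0, the expected utility equals ⟨u(w)⟩_{ρ_S,U} = |β|² X − p |β|² Y − 2 Re(c α β) Z, where X = u(ε₂ − ε₁), Y = u(ε₂ − ε₁) − u(−(ε₂ − ε₁)) and Z = u((ε₂ − ε₁)/2) − u(−(ε₂ − ε₁)/2). -/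
open Matrix BigOperators Finset Kronecker
open scoped ComplexOrder

noncomputable section

namespace Daemonic

/-!
In the energy eigenbasis the expected utility is a sum over triples of levels, weighted by the real
parts of Kirkwood–Dirac quasiprobabilities. A population of `ρ` contributes the classical weight
`ρᵢᵢ |Uₖᵢ|²`. Hermiticity of `ρ` gives a coherence and its conjugate the same weight, and
orthogonality of the columns of the qubit unitary makes this weight change sign with the final
level: it is `∓ Re (c α β)`.
-/

section Coordinates

variable {ι κ : Type*} [Fintype ι]

theorem matElem_ketbra (x y a b : ι → ℂ) :
    matElem (ketbra x y) a b = (star a ⬝ᵥ x) * (star y ⬝ᵥ b) := by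
  simp only [matElem, ketbra, vecMulVec_mulVec, op_smul_eq_smul, dotProduct_smul, smul_eq_mul,
    mul_comm]

theorem matElem_smul (a : ℂ) (M : Matrix ι ι ℂ) (x y : ι → ℂ) :
    matElem (a • M) x y = a * matElem M x y := by
  simp only [matElem, smul_mulVec, dotProduct_smul, smul_eq_mul]

theorem matElem_sum (s : Finset κ) (M : κ → Matrix ι ι ℂ) (x y : ι → ℂ) :
    matElem (∑ k ∈ s, M k) x y = ∑ k ∈ s, matElem (M k) x y := by
  simp only [matElem, sum_mulVec, dotProduct_sum]

theorem matElem_conjTranspose (M : Matrix ι ι ℂ) (x y : ι → ℂ) :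
    matElem Mᴴ x y = star (matElem M y x) := by
  rw [matElem, matElem, ← star_dotProduct_star, star_star, star_mulVec, dotProduct_mulVec]

variable [Fintype κ]

/-- The operator `∑ₐ ∑_b A a b |v a⟩⟨v b|`, whose coordinate matrix in an orthonormal family `v`
is `A`. -/
def ofCoords (v : κ → ι → ℂ) (A : Matrix κ κ ℂ) : Matrix ι ι ℂ :=
  ∑ a, ∑ b, A a b • ketbra (v a) (v b)

theorem matElem_ofCoords [DecidableEq κ] {v : κ → ι → ℂ} (hv : ONFam v) (A : Matrix κ κ ℂ)
    (i j : κ) : matElem (ofCoords v A) (v i) (v j) = A i j := by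
  simp only [ofCoords, matElem_sum, matElem_smul, matElem_ketbra, hv i, hv _ j, mul_ite, mul_one,
    mul_zero, sum_ite_eq, sum_ite_eq', mem_univ, if_true]

end Coordinates

section Quasiprobability

variable {κ : Type*}

/-- The real part `Re (ρᵢⱼ (U†)ⱼₖ Uₖᵢ)` of the Kirkwood–Dirac quasiprobability of the levels
`(i, j, k)`, where `R` and `W` are the coordinate matrices of `ρ` and `U`. -/
def quasiprob (R W : Matrix κ κ ℂ) (i j k : κ) : ℝ :=
  (R i j * star (W k j) * W k i).re

theorem quasiprob_self (R W : Matrix κ κ ℂ) (i k : κ) :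
    quasiprob R W i i k = (R i i).re * Complex.normSq (W k i) := by
  rw [quasiprob, mul_assoc, ← starRingEnd_apply, ← Complex.normSq_eq_conj_mul_self,
    Complex.re_mul_ofReal]

theorem quasiprob_comm {R : Matrix κ κ ℂ} (hR : R.IsHermitian) (W : Matrix κ κ ℂ) (i j k : κ) :
    quasiprob R W i j k = quasiprob R W j i k := by
  have hconj : R i j * star (W k j) * W k i = star (R j i * star (W k i) * W k j) := by
    rw [star_mul', star_mul', star_star, hR.apply]
    ring
  rw [quasiprob, quasiprob, hconj, ← starRingEnd_apply, Complex.conj_re]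

theorem expUtil_ofCoords {n : ℕ} (u : ℝ → ℝ) (q : ℝ) (ε : Fin n → ℝ) {v : Fin n → Fin n → ℂ}
    (hv : ONFam v) (R W : Matrix (Fin n) (Fin n) ℂ) :
    expUtil u q ε v (ofCoords v R) (ofCoords v W) =
      ∑ i, ∑ j, ∑ k, quasiprob R W i j k * u (q * ε i + (1 - q) * ε j - ε k) := by
  simp only [expUtil, matElem_conjTranspose, matElem_ofCoords hv, quasiprob]

theorem expUtil_ofCoords_fin_two (u : ℝ → ℝ) (q : ℝ) (ε : Fin 2 → ℝ) {v : Fin 2 → Fin 2 → ℂ}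
    (hv : ONFam v) {R : Matrix (Fin 2) (Fin 2) ℂ} (hR : R.IsHermitian)
    (W : Matrix (Fin 2) (Fin 2) ℂ) :
    expUtil u q ε v (ofCoords v R) (ofCoords v W) =
      (quasiprob R W 0 0 0 + quasiprob R W 1 1 1) * u 0 +
      quasiprob R W 0 0 1 * u (-(ε 1 - ε 0)) + quasiprob R W 1 1 0 * u (ε 1 - ε 0) +
      quasiprob R W 0 1 0 * (u (q * (ε 1 - ε 0)) + u ((1 - q) * (ε 1 - ε 0))) +
      quasiprob R W 0 1 1 * (u (-(q * (ε 1 - ε 0))) + u (-((1 - q) * (ε 1 - ε 0)))) := by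
  simp only [expUtil_ofCoords u q ε hv, Fin.sum_univ_two, quasiprob_comm hR W 1 0]
  ring_nf

end Quasiprobability

section Qubit

/-- The coordinate matrix of a qubit state with ground-state population `p` and coherence `c`. -/
def qubitState (p : ℝ) (c : ℂ) : Matrix (Fin 2) (Fin 2) ℂ :=
  !![(p : ℂ), c; star c, ((1 - p : ℝ) : ℂ)]

/-- The coordinate matrix with columns `(α, β)` and `(-β*, α*)`; it is unitary when
`|α|² + |β|² = 1`. -/
def qubitUnitary (α β : ℂ) : Matrix (Fin 2) (Fin 2) ℂ :=
  !![α, -star β; β, star α]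

theorem isHermitian_qubitState (p : ℝ) (c : ℂ) : (qubitState p c).IsHermitian := by
  ext i j
  fin_cases i <;> fin_cases j <;> simp [qubitState]

theorem ofCoords_qubitState {ι : Type*} [Fintype ι] (v : Fin 2 → ι → ℂ) (p : ℝ) (c : ℂ) :
    ofCoords v (qubitState p c) =
      (p : ℂ) • ketbra (v 0) (v 0) + c • ketbra (v 0) (v 1) +
      (starRingEnd ℂ c) • ketbra (v 1) (v 0) + ((1 - p : ℝ) : ℂ) • ketbra (v 1) (v 1) := by
  simp [ofCoords, qubitState, Fin.sum_univ_two, add_assoc]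

theorem ofCoords_qubitUnitary {ι : Type*} [Fintype ι] (v : Fin 2 → ι → ℂ) (α β : ℂ) :
    ofCoords v (qubitUnitary α β) =
      α • ketbra (v 0) (v 0) + β • ketbra (v 1) (v 0) +
      (-(starRingEnd ℂ β)) • ketbra (v 0) (v 1) + (starRingEnd ℂ α) • ketbra (v 1) (v 1) := by
  simp only [ofCoords, qubitUnitary, RCLike.star_def, of_apply, cons_val', cons_val_fin_one,
    Fin.sum_univ_two, cons_val_zero, cons_val_one]
  abel

theorem quasiprob_qubit_zero_zero_zero_add_one_one_one (p : ℝ) (c α β : ℂ) :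
    quasiprob (qubitState p c) (qubitUnitary α β) 0 0 0 +
      quasiprob (qubitState p c) (qubitUnitary α β) 1 1 1 = Complex.normSq α := by
  have hground : quasiprob (qubitState p c) (qubitUnitary α β) 0 0 0 = p * Complex.normSq α :=
    quasiprob_self _ _ 0 0
  have hexcited :
      quasiprob (qubitState p c) (qubitUnitary α β) 1 1 1 = (1 - p) * Complex.normSq α := by
    rw [← Complex.normSq_conj α]
    exact quasiprob_self _ _ 1 1
  rw [hground, hexcited]
  ring

theorem quasiprob_qubit_zero_zero_one (p : ℝ) (c α β : ℂ) :
    quasiprob (qubitState p c) (qubitUnitary α β) 0 0 1 = p * Complex.normSq β :=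
  quasiprob_self _ _ 0 1

theorem quasiprob_qubit_one_one_zero (p : ℝ) (c α β : ℂ) :
    quasiprob (qubitState p c) (qubitUnitary α β) 1 1 0 = (1 - p) * Complex.normSq β := by
  rw [← Complex.normSq_conj β, ← Complex.normSq_neg]
  exact quasiprob_self _ _ 1 0

theorem quasiprob_qubit_zero_one_zero (p : ℝ) (c α β : ℂ) :
    quasiprob (qubitState p c) (qubitUnitary α β) 0 1 0 = -(c * α * β).re := by
  have hprod : c * star (-star β) * α = -(c * α * β) := by
    rw [star_neg, star_star]
    ring
  exact congrArg Complex.re hprod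

theorem quasiprob_qubit_zero_one_one (p : ℝ) (c α β : ℂ) :
    quasiprob (qubitState p c) (qubitUnitary α β) 0 1 1 = (c * α * β).re :=
  congrArg (fun z => (c * z * β).re) (star_star α)

end Qubit

theorem stmt10_general (u : ℝ → ℝ) (q : ℝ) (ε : Fin 2 → ℝ)
    (v : Fin 2 → Fin 2 → ℂ) (hv : ONFam v) (p : ℝ) (c α β : ℂ)
    (ρ : Matrix (Fin 2) (Fin 2) ℂ)
    (hρdef : ρ = (p : ℂ) • ketbra (v 0) (v 0) + c • ketbra (v 0) (v 1) +
      (starRingEnd ℂ c) • ketbra (v 1) (v 0) + ((1 - p : ℝ) : ℂ) • ketbra (v 1) (v 1))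
    (U : Matrix (Fin 2) (Fin 2) ℂ)
    (hUdef : U = α • ketbra (v 0) (v 0) + β • ketbra (v 1) (v 0) +
      (-(starRingEnd ℂ β)) • ketbra (v 0) (v 1) + (starRingEnd ℂ α) • ketbra (v 1) (v 1)) :
    expUtil u q ε v ρ U =
      Complex.normSq α * u 0 + Complex.normSq β * u (ε 1 - ε 0) -
      p * Complex.normSq β * (u (ε 1 - ε 0) - u (-(ε 1 - ε 0))) -
      (c * α * β).re * ((u (q * (ε 1 - ε 0)) - u (-(q * (ε 1 - ε 0)))) +
        (u ((1 - q) * (ε 1 - ε 0)) - u (-((1 - q) * (ε 1 - ε 0))))) := by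
  rw [hρdef, hUdef, ← ofCoords_qubitState, ← ofCoords_qubitUnitary,
    expUtil_ofCoords_fin_two u q ε hv (isHermitian_qubitState p c),
    quasiprob_qubit_zero_zero_zero_add_one_one_one,
    quasiprob_qubit_zero_zero_one, quasiprob_qubit_one_one_zero,
    quasiprob_qubit_zero_one_zero, quasiprob_qubit_zero_one_one]
  ring

/-- for a qubit, `q = 1/2` and a utility with `u(0) = 0`, the expected utility
is `⟨u(w)⟩ = |β|² X - p |β|² Y - 2 Re(cαβ) Z`. -/
theorem stmt10 (u : ℝ → ℝ) (hu0 : u 0 = 0)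
    (ε : Fin 2 → ℝ) (hε : ε 0 < ε 1)
    (v : Fin 2 → Fin 2 → ℂ) (hv : ONFam v)
    (p : ℝ) (c α β : ℂ) (hαβ : Complex.normSq α + Complex.normSq β = 1)
    (ρ : Matrix (Fin 2) (Fin 2) ℂ) (hρ : IsDensity ρ)
    (hρdef : ρ = (p : ℂ) • ketbra (v 0) (v 0) + c • ketbra (v 0) (v 1) +
      (starRingEnd ℂ c) • ketbra (v 1) (v 0) + ((1 - p : ℝ) : ℂ) • ketbra (v 1) (v 1))
    (U : Matrix (Fin 2) (Fin 2) ℂ)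
    (hUdef : U = α • ketbra (v 0) (v 0) + β • ketbra (v 1) (v 0) +
      (-(starRingEnd ℂ β)) • ketbra (v 0) (v 1) + (starRingEnd ℂ α) • ketbra (v 1) (v 1)) :
    expUtil u (1/2) ε v ρ U =
      Complex.normSq β * u (ε 1 - ε 0) -
      p * Complex.normSq β * (u (ε 1 - ε 0) - u (-(ε 1 - ε 0))) -
      2 * (c * α * β).re * (u ((ε 1 - ε 0)/2) - u (-((ε 1 - ε 0)/2))) := by
  rw [stmt10_general u (1/2) ε v hv p c α β ρ hρdef U hUdef, hu0]
  ring_nf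
end Daemonic
end
end
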